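/- Let q ≥ 3 be an integer, a_0 ∈ ℤ, and let (a_i)_{i≥1} be an infinite dual q-regular sequence of nonzero integers. Then for the convergents of the λ_q-continued fraction [a_0; a_1, a_2, …] one has q_n ≠ 0 for all n ≥ 0 and the sequence p_n/q_n converges in ℝ; that is, every dual regular λ_q-CF converges. -/

import Mathlib

open Filter Topology

/-- `λ_q = 2 cos (π/q)`. -/
noncomputable def lamq (q : ℕ) : ℝ := 2 * Real.cos (Real.pi / q)

/-- `h_q = (q-2)/2` for even `q` and `(q-3)/2` for odd `q`. -/
def hQ (q : ℕ) : ℕ := if Even q then (q - 2) / 2 else (q - 3) / 2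

/-- Forbidden blocks for the nearest `λ_q`-multiple continued fractions.
For `ε ∈ {1,-1}`: the block `(ε)^{h_q+1}`; for even `q` the blocks `((ε)^{h_q}, ε·m)`, `m ≥ 1`;
for odd `q` (including `q = 3`, where `h_q = 0`) the blocks `((ε)^{h_q}, ε·2, (ε)^{h_q}, ε·m)`,
`m ≥ 1`. -/
def IsForbidden (q : ℕ) (L : List ℤ) : Prop :=
  ∃ ε : ℤ, (ε = 1 ∨ ε = -1) ∧
    (L = List.replicate (hQ q + 1) ε ∨
      (if Even q then
        ∃ m : ℤ, 1 ≤ m ∧ L = List.replicate (hQ q) ε ++ [ε * m]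
      else
        ∃ m : ℤ, 1 ≤ m ∧
          L = List.replicate (hQ q) ε ++ ε * 2 :: (List.replicate (hQ q) ε ++ [ε * m])))

/-- An infinite sequence is `q`-regular if no finite subblock is forbidden. -/
def RegularSeq (q : ℕ) (a : ℕ → ℤ) : Prop :=
  ∀ (l len : ℕ), ¬ IsForbidden q (List.ofFn fun j : Fin len => a (l + (j : ℕ)))

/-- An infinite sequence is dual `q`-regular if no reversed finite subblock is forbidden. -/
def DualRegularSeq (q : ℕ) (a : ℕ → ℤ) : Prop :=
  ∀ (l len : ℕ), ¬ IsForbidden q (List.ofFn fun j : Fin len => a (l + (j : ℕ))).reverse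

/-- A finite sequence is `q`-regular if no contiguous subblock is forbidden. -/
def RegularList (q : ℕ) (L : List ℤ) : Prop :=
  ∀ B : List ℤ, B <:+: L → ¬ IsForbidden q B

/-- Numerators of the convergents: `p₀ = a₀λ`, `p₁ = a₁λ·p₀ - 1`,
`pₙ = aₙλ·pₙ₋₁ - pₙ₋₂` (so that `p₋₁ = 1`, `p₋₂ = 0`).  Here `A n` is the digit `aₙ`. -/
noncomputable def cfP (lam : ℝ) (A : ℕ → ℤ) : ℕ → ℝ
  | 0 => (A 0 : ℝ) * lam
  | 1 => (A 1 : ℝ) * lam * ((A 0 : ℝ) * lam) - 1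
  | (n + 2) => (A (n + 2) : ℝ) * lam * cfP lam A (n + 1) - cfP lam A n

/-- Denominators of the convergents: `q₀ = 1`, `q₁ = a₁λ`,
`qₙ = aₙλ·qₙ₋₁ - qₙ₋₂` (so that `q₋₁ = 0`, `q₋₂ = -1`). -/
noncomputable def cfQ (lam : ℝ) (A : ℕ → ℤ) : ℕ → ℝ
  | 0 => 1
  | 1 => (A 1 : ℝ) * lam
  | (n + 2) => (A (n + 2) : ℝ) * lam * cfQ lam A (n + 1) - cfQ lam A n

/-- The λ-continued fraction with digit sequence `A` converges to `x`. -/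
def CFConvergesTo (lam : ℝ) (A : ℕ → ℤ) (x : ℝ) : Prop :=
  (∀ n, cfQ lam A n ≠ 0) ∧
    Filter.Tendsto (fun n => cfP lam A n / cfQ lam A n) Filter.atTop (nhds x)

/-- The value `p_L/q_L` of the finite continued fraction `[a₀; a₁, …, a_L]`. -/
noncomputable def cfValList (lam : ℝ) (a0 : ℤ) (L : List ℤ) : ℝ :=
  cfP lam (fun i => (a0 :: L).getD i 0) L.length /
    cfQ lam (fun i => (a0 :: L).getD i 0) L.length

/-- The last denominator `q_L` of the finite continued fraction `[a₀; a₁, …, a_L]`. -/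
noncomputable def cfDenList (lam : ℝ) (a0 : ℤ) (L : List ℤ) : ℝ :=
  cfQ lam (fun i => (a0 :: L).getD i 0) L.length

/-- The modified floor: `⌊t⌋* = ⌈t⌉ - 1` for `t > 0` and `⌊t⌋* = ⌊t⌋` for `t ≤ 0`. -/
noncomputable def floorstar (t : ℝ) : ℤ := if 0 < t then ⌈t⌉ - 1 else ⌊t⌋

/-- The nearest `λ`-multiple: `⟨y⟩ = ⌊y/λ + 1/2⌋*`. -/
noncomputable def nearestLam (lam : ℝ) (x : ℝ) : ℤ := floorstar (x / lam + 1 / 2)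

/-- The interval map `f_q` on `I_q = [-λ/2, λ/2]`. -/
noncomputable def fq (lam : ℝ) (x : ℝ) : ℝ :=
  if x = 0 then 0 else -1 / x - (nearestLam lam (-1 / x) : ℝ) * lam

/-- `R_q`: equal to `1` for even `q`, and the positive root of `R² + (2-λ_q)R = 1` for odd `q`. -/
noncomputable def Rq (q : ℕ) : ℝ :=
  if Even q then 1 else (lamq q - 2 + Real.sqrt ((2 - lamq q) ^ 2 + 4)) / 2

/-- `r_q = R_q - λ_q`. -/
noncomputable def rq (q : ℕ) : ℝ := Rq q - lamq q

/-- The map `⟨·⟩*` used by the dual algorithm. -/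
noncomputable def nearestDual (lam R y : ℝ) : ℤ :=
  if 0 ≤ y then floorstar (y / lam + 1 - R / lam) else floorstar (y / lam + R / lam)

/-- The dual interval map `f_q^*` on `I_{R_q} = [-R_q, R_q]`. -/
noncomputable def fqstar (lam R : ℝ) (x : ℝ) : ℝ :=
  if x = 0 then 0 else -1 / x - (nearestDual lam R (-1 / x) : ℝ) * lam

/-- The matrix `S = [[0,-1],[1,0]]` as an element of `SL(2,ℝ)`. -/
noncomputable def matS : Matrix.SpecialLinearGroup (Fin 2) ℝ :=
  ⟨!![0, -1; 1, 0], by norm_num [Matrix.det_fin_two_of]⟩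

/-- The matrix `T = [[1,λ],[0,1]]` as an element of `SL(2,ℝ)`. -/
noncomputable def matT (lam : ℝ) : Matrix.SpecialLinearGroup (Fin 2) ℝ :=
  ⟨!![1, lam; 0, 1], by norm_num [Matrix.det_fin_two_of]⟩

/-- The Hecke triangle group `G_q`, the subgroup of `SL(2,ℝ)` generated by `S` and `T_q`. -/
noncomputable def Hecke (q : ℕ) : Subgroup (Matrix.SpecialLinearGroup (Fin 2) ℝ) :=
  Subgroup.closure {matS, matT (lamq q)}

/-- The Möbius action of `g` on `x ∈ ℝ`. -/
noncomputable def moeb (g : Matrix.SpecialLinearGroup (Fin 2) ℝ) (x : ℝ) : ℝ :=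
  (g.val 0 0 * x + g.val 0 1) / (g.val 1 0 * x + g.val 1 1)

/-- `x` and `y` are `G_q`-equivalent. -/
def GqEquiv (q : ℕ) (x y : ℝ) : Prop :=
  ∃ g ∈ Hecke q, (g.val 1 0 * x + g.val 1 1 ≠ 0) ∧ moeb g x = y

/-- Two sequences have a common tail. -/
def CommonTail (a b : ℕ → ℤ) : Prop := ∃ m n : ℕ, ∀ k : ℕ, a (m + k) = b (n + k)

/-- The period block of `ρ_q`: `(3)` for `q = 3`, `((1)^{h_q-1}, 2)` for even `q`
and `((1)^{h_q}, 2, (1)^{h_q-1}, 2)` for odd `q ≥ 5`. -/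
def rhoBlock (q : ℕ) : List ℤ :=
  if q = 3 then [3]
  else if Even q then List.replicate (hQ q - 1) 1 ++ [2]
  else List.replicate (hQ q) 1 ++ 2 :: (List.replicate (hQ q - 1) 1 ++ [2])

/-- The periodic sequence `ρ_q`. -/
def rho (q : ℕ) (i : ℕ) : ℤ := (rhoBlock q).getD (i % (rhoBlock q).length) 0

/-- `x` has the infinite regular `λ_q`-CF with digit sequence `A` (with `A 0 = a₀`). -/
def HasRegCF (q : ℕ) (x : ℝ) (A : ℕ → ℤ) : Prop :=
  (∀ i, A (i + 1) ≠ 0) ∧ RegularSeq q (fun i => A (i + 1)) ∧ CFConvergesTo (lamq q) A x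

/-- `x` has the infinite dual regular `λ_q`-CF with digit sequence `A` (with `A 0 = a₀`). -/
def HasDualRegCF (q : ℕ) (x : ℝ) (A : ℕ → ℤ) : Prop :=
  (∀ i, A (i + 1) ≠ 0) ∧ DualRegularSeq q (fun i => A (i + 1)) ∧ CFConvergesTo (lamq q) A x

/-- The digits of `x` produced by the algorithm for `f_q`: `a_{i+1} = ⟨-1 / f_q^i(x)⟩`. -/
noncomputable def digitSeq (lam : ℝ) (x : ℝ) : ℕ → ℤ :=
  fun i => nearestLam lam (-1 / (fq lam)^[i] x)

/-- The digits of `x` produced by the algorithm for `f_q^*`: `b_{i+1} = ⟨-1 / (f_q^*)^i(x)⟩*`. -/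
noncomputable def digitSeqStar (lam R : ℝ) (x : ℝ) : ℕ → ℤ :=
  fun i => nearestDual lam R (-1 / (fqstar lam R)^[i] x)

noncomputable def GG (q : ℕ) (x : ℝ) : ℝ :=
  Real.sin (x * (Real.pi / q)) / Real.sin ((x + 1) * (Real.pi / q))

lemma sin_pos_aux (q : ℕ) (hq : 3 ≤ q) (x : ℝ) (h0 : 0 < x) (h1 : x < q) :
    0 < Real.sin (x * (Real.pi / q)) := by
  have hqp : (0 : ℝ) < q := by positivity
  apply Real.sin_pos_of_pos_of_lt_pi
  · have := Real.pi_pos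
    positivity
  · rw [← mul_div_assoc, div_lt_iff₀ hqp]
    nlinarith [Real.pi_pos]

lemma lamq_bounds (q : ℕ) (hq : 3 ≤ q) : 1 ≤ lamq q ∧ lamq q < 2 := by
  have hqp : (3 : ℝ) ≤ q := by exact_mod_cast hq
  have hpi := Real.pi_pos
  have h1 : Real.pi / q ≤ Real.pi / 3 := by gcongr
  have h0 : 0 < Real.pi / q := by positivity
  constructor
  · have := Real.cos_le_cos_of_nonneg_of_le_pi h0.le (by linarith) h1
    rw [Real.cos_pi_div_three] at this
    unfold lamq; linarith
  · have := Real.cos_lt_cos_of_nonneg_of_le_pi le_rfl (by linarith) h0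
    rw [Real.cos_zero] at this
    unfold lamq; linarith

lemma GG_zero (q : ℕ) : GG q 0 = 0 := by simp [GG]

lemma GG_mono (q : ℕ) (hq : 3 ≤ q) (x y : ℝ) (h0 : 0 ≤ x) (h : x ≤ y) (h1 : y + 1 < q) :
    GG q x ≤ GG q y := by
  unfold GG
  rw [div_le_div_iff₀ (sin_pos_aux q hq _ (by linarith) (by linarith))
    (sin_pos_aux q hq _ (by linarith) (by linarith))]
  have e : Real.sin (y * (Real.pi / q)) * Real.sin ((x + 1) * (Real.pi / q))
      - Real.sin (x * (Real.pi / q)) * Real.sin ((y + 1) * (Real.pi / q))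
      = Real.sin ((y - x) * (Real.pi / q)) * Real.sin (1 * (Real.pi / q)) := by
    simp only [add_mul, sub_mul, Real.sin_add, Real.sin_sub, one_mul]
    ring
  have p1 := sin_pos_aux q hq 1 (by linarith) (by linarith)
  have p2 : 0 ≤ Real.sin ((y - x) * (Real.pi / q)) := by
    rcases h.eq_or_lt with h | h
    · simp [h]
    · exact (sin_pos_aux q hq _ (by linarith) (by linarith)).le
  have := mul_nonneg p2 p1.le
  linarith

/-- basic recursion -/
lemma GG_succ (q : ℕ) (hq : 3 ≤ q) (x : ℝ) (h0 : 0 ≤ x) (h1 : x + 2 < q) :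
    0 < lamq q - GG q x ∧ GG q (x + 1) = 1 / (lamq q - GG q x) := by
  have p1 := sin_pos_aux q hq (x + 1) (by linarith) (by linarith)
  have p2 := sin_pos_aux q hq (x + 1 + 1) (by linarith) (by linarith)
  have e : lamq q - GG q x = Real.sin ((x + 1 + 1) * (Real.pi / q)) /
      Real.sin ((x + 1) * (Real.pi / q)) := by
    unfold GG lamq
    rw [eq_div_iff p1.ne', sub_mul, div_mul_cancel₀ _ p1.ne']
    have e1 : (x + 1 + 1) * (Real.pi / q) = (x + 1) * (Real.pi / q) + Real.pi / q := by ring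
    have e2 : x * (Real.pi / q) = (x + 1) * (Real.pi / q) - Real.pi / q := by ring
    rw [e1, e2, Real.sin_add, Real.sin_sub]
    ring
  rw [e]
  refine ⟨by positivity, ?_⟩
  rw [one_div_div]; rfl

lemma GG_step (q : ℕ) (hq : 3 ≤ q) (x u : ℝ) (h0 : 0 ≤ x) (h1 : x + 2 < q) (hu : u ≤ GG q x) :
    1 / (lamq q - u) ≤ GG q (x + 1) := by
  obtain ⟨h2, h3⟩ := GG_succ q hq x h0 h1
  rw [h3]
  exact one_div_le_one_div_of_le h2 (by linarith)

lemma GG_one (q : ℕ) (hq : 3 ≤ q) : GG q 1 = 1 / lamq q := by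
  have hqp : (3 : ℝ) ≤ q := by exact_mod_cast hq
  have := (GG_succ q hq 0 le_rfl (by linarith)).2
  rwa [GG_zero, zero_add, sub_zero] at this

lemma GG_top (q : ℕ) (hq : 3 ≤ q) : GG q ((q : ℝ) / 2 - 1) = lamq q / 2 := by
  have hqp : (3 : ℝ) ≤ q := by exact_mod_cast hq
  have e : ((q : ℝ) / 2 - 1) * (Real.pi / q) = Real.pi / 2 - Real.pi / q := by field_simp
  have e2 : ((q : ℝ) / 2 - 1 + 1) * (Real.pi / q) = Real.pi / 2 := by field_simp; ring
  unfold GG lamq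
  rw [e, e2, Real.sin_pi_div_two_sub, Real.sin_pi_div_two]
  ring

lemma GG_half (q : ℕ) (hq : 3 ≤ q) : GG q (1 / 2) = 1 / (lamq q + 1) := by
  have hqp : (3 : ℝ) ≤ q := by exact_mod_cast hq
  obtain ⟨l1, l2⟩ := lamq_bounds q hq
  have p1 := sin_pos_aux q hq (1 / 2) (by linarith) (by linarith)
  have p2 := sin_pos_aux q hq (1 / 2 + 1) (by linarith) (by linarith)
  unfold GG
  rw [div_eq_div_iff p2.ne' (by linarith)]
  have e : ((1 : ℝ) / 2 + 1) * (Real.pi / q) = 3 * (1 / 2 * (Real.pi / q)) := by ring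
  have e2 : lamq q = 2 * Real.cos (2 * (1 / 2 * (Real.pi / q))) := by
    unfold lamq; congr 2; ring
  rw [e, e2, Real.sin_three_mul, Real.cos_two_mul']
  have := Real.sin_sq_add_cos_sq (1 / 2 * (Real.pi / q))
  rw [Real.cos_sq']
  ring

lemma GG_lam_sub_one (q : ℕ) (hq : 3 ≤ q) : GG q ((q : ℝ) / 2 - 3 / 2) = lamq q - 1 := by
  have hqp : (3 : ℝ) ≤ q := by exact_mod_cast hq
  have h := GG_succ q hq ((q : ℝ) / 2 - 3 / 2) (by linarith) (by linarith)
  have p2 := sin_pos_aux q hq ((q : ℝ) / 2 - 3 / 2 + 1) (by linarith) (by linarith)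
  have e : GG q ((q : ℝ) / 2 - 3 / 2 + 1) = 1 := by
    unfold GG
    have : ((q : ℝ) / 2 - 3 / 2 + 1 + 1) * (Real.pi / q)
        = Real.pi - ((q : ℝ) / 2 - 3 / 2 + 1) * (Real.pi / q) := by field_simp; ring
    rw [this, Real.sin_pi_sub, div_self p2.ne']
  rw [e, eq_div_iff h.1.ne'] at h
  linarith [h.2]

/-- value of the finite reversed fraction -/
noncomputable def TT (lam : ℝ) : List ℤ → ℝ
  | [] => 0
  | a :: L => 1 / ((a : ℝ) * lam - TT lam L)

lemma TT_sign (lam : ℝ) (ε a : ℤ) (hε : ε = 1 ∨ ε = -1) (L : List ℤ) :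
    (ε : ℝ) * TT lam (a :: L) = 1 / (((ε * a : ℤ) : ℝ) * lam - ε * TT lam L) := by
  rcases hε with rfl | rfl
  · simp [TT]
  · simp only [TT]
    push_cast
    rw [show (-1 * (a : ℝ) * lam - -1 * TT lam L) = -((a : ℝ) * lam - TT lam L) by ring,
      one_div_neg_eq_neg_one_div]
    ring

def InvE (q : ℕ) (ε : ℤ) (L : List ℤ) : Prop :=
  (∃ k : ℕ, k ≤ hQ q ∧ List.replicate k ε <+: L ∧ (ε : ℝ) * TT (lamq q) L ≤ GG q k) ∨
  (∃ (k : ℕ) (m : ℤ), k + 1 ≤ hQ q ∧ 1 ≤ m ∧ List.replicate k ε ++ [ε * m] <+: L ∧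
    (ε : ℝ) * TT (lamq q) L ≤ GG q ((k : ℝ) + 1))

def InvO (q : ℕ) (ε : ℤ) (L : List ℤ) : Prop :=
  (∃ k : ℕ, k ≤ hQ q ∧ List.replicate k ε <+: L ∧ (ε : ℝ) * TT (lamq q) L ≤ GG q k) ∨
  (∃ (k : ℕ) (m : ℤ), k ≤ hQ q ∧ 1 ≤ m ∧ List.replicate k ε ++ [ε * m] <+: L ∧
    (ε : ℝ) * TT (lamq q) L ≤ GG q ((k : ℝ) + 1 / 2)) ∨
  (∃ (k : ℕ) (m : ℤ), k + 1 ≤ hQ q ∧ 1 ≤ m ∧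
    List.replicate k ε ++ ε * 2 :: (List.replicate (hQ q) ε ++ [ε * m]) <+: L ∧
    (ε : ℝ) * TT (lamq q) L ≤ GG q ((k : ℝ) + 1))

lemma hQ_even (q : ℕ) (hq : 3 ≤ q) (he : Even q) : 1 ≤ hQ q ∧ (q : ℝ) = 2 * hQ q + 2 := by
  have : q = 2 * hQ q + 2 := by
    unfold hQ; rw [if_pos he]; obtain ⟨k, rfl⟩ := he; omega
  refine ⟨?_, by exact_mod_cast this⟩
  obtain ⟨k, rfl⟩ := he; omega

lemma hQ_odd (q : ℕ) (hq : 3 ≤ q) (he : ¬ Even q) : (q : ℝ) = 2 * hQ q + 3 := by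
  have : q = 2 * hQ q + 3 := by
    unfold hQ; rw [if_neg he]
    rw [Nat.not_even_iff_odd] at he
    obtain ⟨k, rfl⟩ := he; omega
  exact_mod_cast this

lemma InvE_le (q : ℕ) (hq : 3 ≤ q) (he : Even q) (ε : ℤ) (L : List ℤ) (h : InvE q ε L) :
    (ε : ℝ) * TT (lamq q) L ≤ lamq q / 2 := by
  obtain ⟨h1, h2⟩ := hQ_even q hq he
  have ht := GG_top q hq
  rw [show (q : ℝ) / 2 - 1 = hQ q by linarith] at ht
  have hh : (1 : ℝ) ≤ hQ q := by exact_mod_cast h1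
  rw [← ht]
  rcases h with ⟨k, hk, -, h⟩ | ⟨k, m, hk, -, -, h⟩
  · have hk' : (k : ℝ) ≤ hQ q := by exact_mod_cast hk
    exact h.trans (GG_mono q hq _ _ (by positivity) hk' (by linarith))
  · have hk' : (k : ℝ) + 1 ≤ hQ q := by exact_mod_cast hk
    exact h.trans (GG_mono q hq _ _ (by positivity) hk' (by linarith))

lemma InvO_le (q : ℕ) (hq : 3 ≤ q) (he : ¬ Even q) (ε : ℤ) (L : List ℤ) (h : InvO q ε L) :
    (ε : ℝ) * TT (lamq q) L ≤ lamq q / 2 := by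
  have h2 := hQ_odd q hq he
  have ht := GG_top q hq
  have hh : (0 : ℝ) ≤ hQ q := by positivity
  rw [← ht]
  rcases h with ⟨k, hk, -, h⟩ | ⟨k, m, hk, -, -, h⟩ | ⟨k, m, hk, -, -, h⟩
  · have hk' : (k : ℝ) ≤ hQ q := by exact_mod_cast hk
    exact h.trans (GG_mono q hq _ _ (by positivity) (by linarith) (by linarith))
  · have hk' : (k : ℝ) ≤ hQ q := by exact_mod_cast hk
    exact h.trans (GG_mono q hq _ _ (by positivity) (by linarith) (by linarith))
  · have hk' : (k : ℝ) + 1 ≤ hQ q := by exact_mod_cast hk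
    exact h.trans (GG_mono q hq _ _ (by positivity) (by linarith) (by linarith))

lemma pre_cons {a : ℤ} {B L : List ℤ} (h : B <+: L) : a :: B <+: a :: L := by
  simpa using h

lemma eps_one {ε a : ℤ} (hε : ε = 1 ∨ ε = -1) (b : ℤ) (h : ε * a = b) : a = ε * b := by
  rcases hε with rfl | rfl <;> omega

/-- negative digit -/
lemma step_neg (lam u b : ℝ) (hl : 0 < lam) (hu : -(lam / 2) ≤ u) (hb : b ≤ -1) :
    1 / (b * lam - u) ≤ 0 := by
  apply one_div_nonpos.2
  nlinarith

lemma stepE (q : ℕ) (hq : 3 ≤ q) (he : Even q) (ε a : ℤ) (hε : ε = 1 ∨ ε = -1) (L : List ℤ)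
    (ha : a ≠ 0) (hr : ∀ B, B <+: a :: L → ¬ IsForbidden q B)
    (h : InvE q ε L) (h' : -(lamq q / 2) ≤ (ε : ℝ) * TT (lamq q) L) : InvE q ε (a :: L) := by
  obtain ⟨h1, h2⟩ := hQ_even q hq he
  obtain ⟨l1, l2⟩ := lamq_bounds q hq
  have hle := InvE_le q hq he ε L h
  have hh : (1 : ℝ) ≤ hQ q := by exact_mod_cast h1
  unfold InvE
  rw [TT_sign _ _ _ hε]
  have hb0 : ε * a ≠ 0 := by rcases hε with rfl | rfl <;> simpa using ha
  generalize hb : ε * a = b at hb0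
  have hab := eps_one hε b hb
  obtain hneg | rfl | hb2 : b ≤ -1 ∨ b = 1 ∨ 2 ≤ b := by omega
  · left
    refine ⟨0, by omega, by simp, ?_⟩
    rw [Nat.cast_zero, GG_zero]
    exact step_neg _ _ _ (by linarith) h' (by exact_mod_cast hneg)
  · rw [mul_one] at hab
    subst hab
    rw [Int.cast_one, one_mul]
    rcases h with ⟨k, hk, hp, h⟩ | ⟨k, m, hk, hm, hp, h⟩
    · left
      have hpp : List.replicate (k + 1) a <+: a :: L := by
        rw [List.replicate_succ]; exact pre_cons hp
      have hk' : k + 1 ≤ hQ q := by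
        by_contra hc
        have : k = hQ q := by omega
        subst this
        exact hr _ hpp ⟨a, hε, Or.inl rfl⟩
      have hk2 : (k : ℝ) + 1 ≤ hQ q := by exact_mod_cast hk'
      refine ⟨k + 1, hk', hpp, ?_⟩
      rw [Nat.cast_add_one]
      exact GG_step q hq _ _ (by positivity) (by linarith) h
    · right
      have hpp : List.replicate (k + 1) a ++ [a * m] <+: a :: L := by
        rw [List.replicate_succ]; exact pre_cons hp
      have hk' : k + 1 + 1 ≤ hQ q := by
        by_contra hc
        have hke : k + 1 = hQ q := by omega
        refine hr _ hpp ⟨a, hε, Or.inr ?_⟩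
        rw [if_pos he]
        exact ⟨m, hm, by rw [hke]⟩
      have hk2 : (k : ℝ) + 1 + 1 ≤ hQ q := by exact_mod_cast hk'
      refine ⟨k + 1, m, hk', hm, hpp, ?_⟩
      rw [Nat.cast_add_one]
      exact GG_step q hq _ _ (by positivity) (by linarith) h
  · right
    refine ⟨0, b, by omega, by omega, by simp [hab], ?_⟩
    have hb2' : (2 : ℝ) ≤ b := by exact_mod_cast hb2
    rw [Nat.cast_zero, zero_add, GG_one q hq]
    apply one_div_le_one_div_of_le (by linarith)
    nlinarith

lemma stepO (q : ℕ) (hq : 3 ≤ q) (he : ¬ Even q) (ε a : ℤ) (hε : ε = 1 ∨ ε = -1) (L : List ℤ)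
    (ha : a ≠ 0) (hr : ∀ B, B <+: a :: L → ¬ IsForbidden q B)
    (h : InvO q ε L) (h' : -(lamq q / 2) ≤ (ε : ℝ) * TT (lamq q) L) : InvO q ε (a :: L) := by
  have h2 := hQ_odd q hq he
  obtain ⟨l1, l2⟩ := lamq_bounds q hq
  have hle := InvO_le q hq he ε L h
  have hh : (0 : ℝ) ≤ hQ q := by positivity
  have hl1 := GG_lam_sub_one q hq
  rw [show (q : ℝ) / 2 - 3 / 2 = hQ q by linarith] at hl1
  unfold InvO
  rw [TT_sign _ _ _ hε]
  have hb0 : ε * a ≠ 0 := by rcases hε with rfl | rfl <;> simpa using ha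
  generalize hb : ε * a = b at hb0
  have hab := eps_one hε b hb
  obtain hneg | rfl | rfl | hb3 : b ≤ -1 ∨ b = 1 ∨ b = 2 ∨ 3 ≤ b := by omega
  · left
    refine ⟨0, by omega, by simp, ?_⟩
    rw [Nat.cast_zero, GG_zero]
    exact step_neg _ _ _ (by linarith) h' (by exact_mod_cast hneg)
  · rw [mul_one] at hab
    subst hab
    rw [Int.cast_one, one_mul]
    rcases h with ⟨k, hk, hp, h⟩ | ⟨k, m, hk, hm, hp, h⟩ | ⟨k, m, hk, hm, hp, h⟩
    · left
      have hpp : List.replicate (k + 1) a <+: a :: L := by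
        rw [List.replicate_succ]; exact pre_cons hp
      have hk' : k + 1 ≤ hQ q := by
        by_contra hc
        have : k = hQ q := by omega
        subst this
        exact hr _ hpp ⟨a, hε, Or.inl rfl⟩
      have hk2 : (k : ℝ) + 1 ≤ hQ q := by exact_mod_cast hk'
      refine ⟨k + 1, hk', hpp, ?_⟩
      rw [Nat.cast_add_one]
      exact GG_step q hq _ _ (by positivity) (by linarith) h
    · right; left
      have hpp : List.replicate (k + 1) a ++ [a * m] <+: a :: L := by
        rw [List.replicate_succ]; exact pre_cons hp
      have hk' : k + 1 ≤ hQ q := by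
        by_contra hc
        have : k = hQ q := by omega
        subst this
        exact hr _ ((List.prefix_append _ _).trans hpp) ⟨a, hε, Or.inl rfl⟩
      have hk2 : (k : ℝ) + 1 ≤ hQ q := by exact_mod_cast hk'
      refine ⟨k + 1, m, hk', hm, hpp, ?_⟩
      rw [Nat.cast_add_one, show (k : ℝ) + 1 + 1 / 2 = k + 1 / 2 + 1 by ring]
      exact GG_step q hq _ _ (by positivity) (by linarith) h
    · right; right
      have hpp : List.replicate (k + 1) a ++ a * 2 :: (List.replicate (hQ q) a ++ [a * m])
          <+: a :: L := by
        rw [List.replicate_succ]; exact pre_cons hp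
      have hk' : k + 1 + 1 ≤ hQ q := by
        by_contra hc
        have hke : k + 1 = hQ q := by omega
        refine hr _ hpp ⟨a, hε, Or.inr ?_⟩
        rw [if_neg he]
        exact ⟨m, hm, by rw [hke]⟩
      have hk2 : (k : ℝ) + 1 + 1 ≤ hQ q := by exact_mod_cast hk'
      refine ⟨k + 1, m, hk', hm, hpp, ?_⟩
      rw [Nat.cast_add_one]
      exact GG_step q hq _ _ (by positivity) (by linarith) h
  · have key : (ε : ℝ) * TT (lamq q) L ≤ lamq q - 1 ∨
        ∃ m : ℤ, 1 ≤ m ∧ List.replicate (hQ q) ε ++ [ε * m] <+: L := by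
      rw [← hl1]
      rcases h with ⟨k, hk, hp, h⟩ | ⟨k, m, hk, hm, hp, h⟩ | ⟨k, m, hk, hm, hp, h⟩
      · left
        have hk' : (k : ℝ) ≤ hQ q := by exact_mod_cast hk
        exact h.trans (GG_mono q hq _ _ (by positivity) (by linarith) (by linarith))
      · rcases hk.eq_or_lt with rfl | hk
        · exact Or.inr ⟨m, hm, hp⟩
        · left
          have hk' : (k : ℝ) + 1 ≤ hQ q := by exact_mod_cast hk
          exact h.trans (GG_mono q hq _ _ (by positivity) (by linarith) (by linarith))
      · left
        have hk' : (k : ℝ) + 1 ≤ hQ q := by exact_mod_cast hk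
        exact h.trans (GG_mono q hq _ _ (by positivity) (by linarith) (by linarith))
    right
    rcases key with key | ⟨m, hm, hp⟩
    · left
      refine ⟨0, 2, by omega, by omega, by simp [hab], ?_⟩
      rw [Nat.cast_zero, zero_add, GG_half q hq]
      apply one_div_le_one_div_of_le (by linarith)
      push_cast
      linarith
    · right
      have hpp : ε * 2 :: (List.replicate (hQ q) ε ++ [ε * m]) <+: a :: L := by
        rw [hab]; exact pre_cons hp
      have hk' : 0 + 1 ≤ hQ q := by
        by_contra hc
        have hke : hQ q = 0 := by omega
        refine hr _ hpp ⟨ε, hε, Or.inr ?_⟩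
        rw [if_neg he]
        exact ⟨m, hm, by simp [hke]⟩
      refine ⟨0, m, hk', hm, by simpa using hpp, ?_⟩
      rw [Nat.cast_zero, zero_add, GG_one q hq]
      apply one_div_le_one_div_of_le (by linarith)
      push_cast
      linarith
  · right; left
    refine ⟨0, b, by omega, by omega, by simp [hab], ?_⟩
    have hb3' : (3 : ℝ) ≤ b := by exact_mod_cast hb3
    rw [Nat.cast_zero, zero_add, GG_half q hq]
    apply one_div_le_one_div_of_le (by linarith)
    nlinarith

lemma TT_bound (q : ℕ) (hq : 3 ≤ q) (L : List ℤ) (hnz : ∀ a ∈ L, a ≠ 0) (hr : RegularList q L) :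
    |TT (lamq q) L| ≤ lamq q / 2 := by
  obtain ⟨l1, l2⟩ := lamq_bounds q hq
  suffices H : ∀ ε : ℤ, ε = 1 ∨ ε = -1 →
      (Even q → InvE q ε L) ∧ (¬ Even q → InvO q ε L) by
    have H2 : ∀ ε : ℤ, ε = 1 ∨ ε = -1 → (ε : ℝ) * TT (lamq q) L ≤ lamq q / 2 := by
      intro ε hε
      by_cases he : Even q
      · exact InvE_le q hq he ε L ((H ε hε).1 he)
      · exact InvO_le q hq he ε L ((H ε hε).2 he)
    have a1 := H2 1 (Or.inl rfl)
    have a2 := H2 (-1) (Or.inr rfl)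
    push_cast at a1 a2
    rw [abs_le]
    constructor <;> linarith
  induction L with
  | nil =>
    intro ε hε
    refine ⟨fun _ => Or.inl ⟨0, by omega, by simp, ?_⟩, fun _ => Or.inl ⟨0, by omega, by simp, ?_⟩⟩
    · simp [TT, GG_zero]
    · simp [TT, GG_zero]
  | cons a L ih =>
    have ih' := ih (fun b hb => hnz b (List.mem_cons_of_mem _ hb))
      (fun B hB => hr B (hB.trans (List.suffix_cons a L).isInfix))
    have hp : ∀ B, B <+: a :: L → ¬ IsForbidden q B := fun B hB => hr B hB.isInfix
    intro ε hε
    have hneg : -ε = 1 ∨ -ε = -1 := by omega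
    have ha : a ≠ 0 := hnz a (by simp)
    constructor
    · intro he
      refine stepE q hq he ε a hε L ha hp ((ih' ε hε).1 he) ?_
      have := InvE_le q hq he (-ε) L ((ih' (-ε) hneg).1 he)
      push_cast at this
      linarith
    · intro he
      refine stepO q hq he ε a hε L ha hp ((ih' ε hε).2 he) ?_
      have := InvO_le q hq he (-ε) L ((ih' (-ε) hneg).2 he)
      push_cast at this
      linarith

lemma ofFn_infix (A : ℕ → ℤ) (n : ℕ) (s B t : List ℤ)
    (h : s ++ B ++ t = List.ofFn fun j : Fin n => A (j : ℕ)) :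
    B = List.ofFn fun j : Fin B.length => A (s.length + (j : ℕ)) := by
  apply List.ext_getElem (by simp)
  intro i h1 h2
  have hlen : s.length + i < (s ++ B ++ t).length := by simp; omega
  have e : (s ++ B ++ t)[s.length + i] = B[i] := by
    rw [List.getElem_append_left (by simp; omega)]
    rw [List.getElem_append_right (by omega)]
    simp
  rw [← e]
  simp [h]

/-- history of digits, most recent first -/
def hist (A : ℕ → ℤ) : ℕ → List ℤ
  | 0 => []
  | n + 1 => A (n + 1) :: hist A n

lemma hist_eq (A : ℕ → ℤ) (n : ℕ) :
    hist A n = (List.ofFn fun j : Fin n => A ((j : ℕ) + 1)).reverse := by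
  induction n with
  | zero => simp [hist]
  | succ n ih => rw [hist, ih, List.ofFn_succ_last]; simp

lemma hist_regular (q : ℕ) (A : ℕ → ℤ) (h : DualRegularSeq q (fun i => A (i + 1))) (n : ℕ) :
    RegularList q (hist A n) := by
  rintro B ⟨s, t, hB⟩ hf
  rw [hist_eq, ← List.reverse_inj, List.reverse_reverse] at hB
  simp only [List.reverse_append] at hB
  rw [← List.append_assoc] at hB
  have := ofFn_infix (fun i => A (i + 1)) n _ _ _ hB
  apply h t.reverse.length B.reverse.length
  rw [← this, List.reverse_reverse]
  exact hf

lemma hist_nz (A : ℕ → ℤ) (h : ∀ i, A (i + 1) ≠ 0) (n : ℕ) : ∀ a ∈ hist A n, a ≠ 0 := by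
  induction n with
  | zero => simp [hist]
  | succ n ih =>
    intro a ha
    rw [hist, List.mem_cons] at ha
    rcases ha with rfl | ha
    · exact h n
    · exact ih a ha

lemma den_nz (lam t : ℝ) (a : ℤ) (hl : 0 < lam) (ha : a ≠ 0) (ht : |t| ≤ lam / 2) :
    (a : ℝ) * lam - t ≠ 0 := by
  intro h
  have h1 : (1 : ℝ) ≤ |(a : ℝ)| := by exact_mod_cast Int.one_le_abs ha
  have h2 : |(a : ℝ)| * lam = |t| := by
    rw [show t = (a : ℝ) * lam by linarith, abs_mul, abs_of_pos hl]
  nlinarith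

lemma cf_det (lam : ℝ) (A : ℕ → ℤ) (n : ℕ) :
    cfP lam A (n + 1) * cfQ lam A n - cfP lam A n * cfQ lam A (n + 1) = -1 := by
  induction n with
  | zero => simp [cfP, cfQ]; ring
  | succ n ih =>
    have e1 : cfP lam A (n + 1 + 1) = (A (n + 2) : ℝ) * lam * cfP lam A (n + 1) - cfP lam A n := rfl
    have e2 : cfQ lam A (n + 1 + 1) = (A (n + 2) : ℝ) * lam * cfQ lam A (n + 1) - cfQ lam A n := rfl
    rw [e1, e2]
    linarith

lemma cfQ_main (lam : ℝ) (A : ℕ → ℤ) (hl : 0 < lam) (hnz : ∀ i, A (i + 1) ≠ 0)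
    (hb : ∀ n, |TT lam (hist A n)| ≤ lam / 2) (n : ℕ) :
    cfQ lam A n ≠ 0 ∧ cfQ lam A (n + 1) ≠ 0 ∧
      TT lam (hist A (n + 1)) = cfQ lam A n / cfQ lam A (n + 1) := by
  induction n with
  | zero =>
    refine ⟨by simp [cfQ], ?_, by simp [cfQ, hist, TT]⟩
    have := hnz 0
    simp only [zero_add] at this
    simp [cfQ, this, hl.ne']
  | succ n ih =>
    obtain ⟨i1, i2, i3⟩ := ih
    have hd := den_nz lam _ _ hl (hnz (n + 1)) (hb (n + 1))
    have e2 : cfQ lam A (n + 1 + 1)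
        = ((A (n + 1 + 1) : ℝ) * lam - TT lam (hist A (n + 1))) * cfQ lam A (n + 1) := by
      rw [i3, sub_mul, div_mul_cancel₀ _ i2]; rfl
    refine ⟨i2, ?_, ?_⟩
    · rw [e2]; exact mul_ne_zero hd i2
    · rw [hist, TT, e2]
      field_simp

/-- Every dual regular `λ_q`-CF converges: the denominators `q_n` never vanish and the
convergents `p_n/q_n` converge in `ℝ`. -/
theorem stmt2 (q : ℕ) (hq : 3 ≤ q) (A : ℕ → ℤ)
    (hnz : ∀ i, A (i + 1) ≠ 0) (hdreg : DualRegularSeq q (fun i => A (i + 1))) :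
    (∀ n, cfQ (lamq q) A n ≠ 0) ∧
      ∃ x : ℝ, Filter.Tendsto (fun n => cfP (lamq q) A n / cfQ (lamq q) A n)
        Filter.atTop (nhds x) := by
  obtain ⟨l1, l2⟩ := lamq_bounds q hq
  have hl : 0 < lamq q := by linarith
  have hb : ∀ n, |TT (lamq q) (hist A n)| ≤ lamq q / 2 := fun n =>
    TT_bound q hq _ (hist_nz A hnz n) (hist_regular q A hdreg n)
  have hm := cfQ_main (lamq q) A hl hnz hb
  refine ⟨fun n => (hm n).1, ?_⟩
  set r := lamq q / 2 with hr
  have hr0 : 0 < r := by linarith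
  have hr1 : r < 1 := by linarith
  have hgrow : ∀ n, |cfQ (lamq q) A n| ≤ r * |cfQ (lamq q) A (n + 1)| := by
    intro n
    have h1 := hb (n + 1)
    rw [(hm n).2.2, abs_div, div_le_iff₀ (abs_pos.2 (hm n).2.1)] at h1
    exact h1
  have hpow : ∀ n, 1 ≤ r ^ n * |cfQ (lamq q) A n| := by
    intro n
    induction n with
    | zero => simp [cfQ]
    | succ n ih =>
      have := mul_le_mul_of_nonneg_left (hgrow n) (pow_pos hr0 n).le
      rw [pow_succ]
      linarith
  have hinv : ∀ n, 1 / |cfQ (lamq q) A n| ≤ r ^ n := by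
    intro n
    rw [div_le_iff₀ (abs_pos.2 (hm n).1)]
    exact hpow n
  apply cauchySeq_tendsto_of_complete
  apply cauchySeq_of_le_geometric r 1 hr1
  intro n
  have q0 := (hm n).1
  have q1 := (hm n).2.1
  have e : cfP (lamq q) A n / cfQ (lamq q) A n - cfP (lamq q) A (n + 1) / cfQ (lamq q) A (n + 1)
      = 1 / cfQ (lamq q) A n * (1 / cfQ (lamq q) A (n + 1)) := by
    have := cf_det (lamq q) A n
    field_simp
    linarith
  rw [Real.dist_eq, e, abs_mul, abs_div, abs_div, abs_one]
  calc 1 / |cfQ (lamq q) A n| * (1 / |cfQ (lamq q) A (n + 1)|) ≤ r ^ n * r ^ (n + 1) :=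
        mul_le_mul (hinv n) (hinv (n + 1)) (by positivity) (by positivity)
    _ ≤ r ^ n * 1 := by
        gcongr
        exact pow_le_one₀ hr0.le hr1.le
    _ = 1 * r ^ n := by ring
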